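/- arXiv:2206.09343 — 6 statements merged into one kernel-verified Lean document; each statement's English description precedes it below -/
import Mathlib

section
/- Let Ω ⊆ ℝ² be open, let g : Ω → (symmetric positive definite real 2×2 matrices) be C¹, and let γ : ℝ → Ω be C² with τ(t) := γ'(t) ≠ 0 for all t. Define the g-arclength s(t) = ∫₀ᵗ √(τ(α)ᵀ g(γ(α)) τ(α)) dα and let φ : ℝ → ℝ be differentiable with φ(s(t)) = t and s(φ(r)) = r for all t, r. Set μ = γ∘φ and T = μ'. Then T is differentiable, and the geodesic curvature κ(r) := (T'(r) + Γ(T(r),T(r)))ᵀ g(μ(r)) N(r), where (Γ(v,w))^k = Γ^k_{ij}(γ-point) v^i w^j and N(r) is the g-unit normal of T(r) computed with g(μ(r)), satisfies at r = s(t): κ(s(t)) = (√(det g) / (τᵀ g τ)^{3/2}) · ( γ''(t)·ν + τ^i τ^j Γ^k_{ij} δ_{kl} ν^l ), where ν is the Euclidean rotated normal of τ(t) and all g-dependent quantities on the right are evaluated at γ(t). -/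
noncomputable section

open Matrix BigOperators

abbrev Vec2 := Fin 2 → ℝ
abbrev Mat2 := Matrix (Fin 2) (Fin 2) ℝ

/-- The two-dimensional alternating symbol: `eps2 0 1 = 1`, `eps2 1 0 = -1`, `eps2 i i = 0`. -/
def eps2 (i j : Fin 2) : ℝ := (j.1 : ℝ) - (i.1 : ℝ)

/-- Euclidean rotated normal `ν = (-τ², τ¹)` of a vector `τ`. -/
def rot2 (τ : Vec2) : Vec2 := ![-(τ 1), τ 0]

/-- The `g`-rotated normal `ν̃^k = -g^{kj} ε_{ji} τ^i`. -/
def gNormal (g : Mat2) (τ : Vec2) : Vec2 :=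
  fun k => -∑ j, ∑ i, g⁻¹ k j * eps2 j i * τ i

/-- The `g`-unit tangent `τ̂ = τ / √(τᵀ g τ)`. -/
def gUnitTangent (g : Mat2) (τ : Vec2) : Vec2 :=
  (Real.sqrt (τ ⬝ᵥ g.mulVec τ))⁻¹ • τ

/-- The `g`-unit normal `n̂ = ν̃ / √(ν̃ᵀ g ν̃)`. -/
def gUnitNormal (g : Mat2) (τ : Vec2) : Vec2 :=
  (Real.sqrt (gNormal g τ ⬝ᵥ g.mulVec (gNormal g τ)))⁻¹ • gNormal g τ

/-- Partial derivative `∂_i f (x)`. -/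
def pd (i : Fin 2) (f : Vec2 → ℝ) (x : Vec2) : ℝ := fderiv ℝ f x (Pi.single i 1)

/-- Christoffel symbol of the first kind `Γ_{ijl} = ½(∂_i g_{jl} + ∂_j g_{li} - ∂_l g_{ij})`. -/
def Gamma1 (g : Vec2 → Mat2) (x : Vec2) (i j l : Fin 2) : ℝ :=
  (pd i (fun y => g y j l) x + pd j (fun y => g y l i) x - pd l (fun y => g y i j) x) / 2

/-- Christoffel symbol of the second kind `Γ^k_{ij} = g^{kl} Γ_{ijl}`. -/
def Gamma2 (g : Vec2 → Mat2) (x : Vec2) (i j k : Fin 2) : ℝ :=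
  ∑ l, (g x)⁻¹ k l * Gamma1 g x i j l

/-- Euclidean incompatibility `inc σ = ∂₁∂₁σ₂₂ - 2 ∂₁∂₂σ₁₂ + ∂₂∂₂σ₁₁`. -/
def incE (σ : Vec2 → Mat2) (x : Vec2) : ℝ :=
  pd 0 (pd 0 (fun y => σ y 1 1)) x - 2 * pd 0 (pd 1 (fun y => σ y 0 1)) x
    + pd 1 (pd 1 (fun y => σ y 0 0)) x

/-- Covariant curl `(curl_g σ)_i = (det g)^{-1/2} ε^{jk}(∂_j σ_{ik} - Γ^m_{ji} σ_{mk})`. -/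
def curlg (g σ : Vec2 → Mat2) (x : Vec2) (i : Fin 2) : ℝ :=
  (Real.sqrt (g x).det)⁻¹ * ∑ j, ∑ k, eps2 j k *
    (pd j (fun y => σ y i k) x - ∑ m, Gamma2 g x j i m * σ x m k)

/-- Covariant incompatibility `inc_g σ`. -/
def incg (g σ : Vec2 → Mat2) (x : Vec2) : ℝ :=
  ((g x).det)⁻¹ *
    ((∑ q, ∑ i, ∑ j, ∑ k, eps2 q i * eps2 j k * pd j (pd q (fun y => σ y i k)) x)
      - (∑ q, ∑ i, ∑ j, ∑ k, eps2 q i * eps2 j k *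
          pd q (fun y => ∑ m, Gamma2 g y j i m * σ y m k) x)
      - (∑ q, ∑ i, ∑ j, ∑ k, (∑ l, Gamma2 g x l q l) * eps2 q i * eps2 j k *
          (pd j (fun y => σ y i k) x - ∑ m, Gamma2 g x j i m * σ x m k)))

/-- Coordinate Riemann component `R₁₂₂₁ = ∂₁Γ₂₂₁ - ∂₂Γ₁₂₁ - Γ₁₁ₚΓᵖ₂₂ + Γ₂₁ₚΓᵖ₁₂`. -/
def R1221 (g : Vec2 → Mat2) (x : Vec2) : ℝ :=
  pd 0 (fun y => Gamma1 g y 1 1 0) x - pd 1 (fun y => Gamma1 g y 0 1 0) x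
    - (∑ p, Gamma1 g x 0 0 p * Gamma2 g x 1 1 p)
    + (∑ p, Gamma1 g x 1 0 p * Gamma2 g x 0 1 p)

theorem mulVec_gUnitNormal_aux (G : Mat2) (hS : G.IsSymm) (hP : G.PosDef) (v : Vec2) :
    G.mulVec (gUnitNormal G v) =
      (Real.sqrt G.det / Real.sqrt (v ⬝ᵥ G.mulVec v)) • rot2 v := by
  have hd : 0 < G.det := hP.det_pos
  have hn : G.mulVec (gNormal G v) = rot2 v := by
    have h1 : gNormal G v = G⁻¹.mulVec (rot2 v) := by
      ext k
      simp [gNormal, Matrix.mulVec, dotProduct, Fin.sum_univ_two, eps2, rot2]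
      ring
    rw [h1, Matrix.mulVec_mulVec, Matrix.mul_nonsing_inv _ hd.ne'.isUnit, Matrix.one_mulVec]
  have h01 : G 1 0 = G 0 1 := hS.apply 0 1
  have hq : gNormal G v ⬝ᵥ G.mulVec (gNormal G v) = (v ⬝ᵥ G.mulVec v) / G.det := by
    rw [hn, eq_div_iff hd.ne']
    have ha := congrFun hn 0
    have hb := congrFun hn 1
    simp [Matrix.mulVec, dotProduct, Fin.sum_univ_two, rot2, h01] at ha hb
    rw [Matrix.det_fin_two]
    simp [Matrix.mulVec, dotProduct, Fin.sum_univ_two, rot2, h01]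
    grind
  rw [gUnitNormal, Matrix.mulVec_smul, hq, hn, Real.sqrt_div' _ hd.le, inv_div]

theorem dot_smul_aux (G : Mat2) (c : ℝ) (v : Vec2) :
    (c • v) ⬝ᵥ G.mulVec (c • v) = c ^ 2 * (v ⬝ᵥ G.mulVec v) := by
  simp [Matrix.mulVec_smul]
  ring

/-- formula for the geodesic curvature in an arbitrary parametrization. -/
theorem geodesicCurvature_formula
    (Ω : Set Vec2) (hΩ : IsOpen Ω)
    (g : Vec2 → Mat2)
    (hg : ∀ i j, ContDiffOn ℝ 1 (fun y => g y i j) Ω)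
    (hg_symm : ∀ x ∈ Ω, (g x).IsSymm) (hg_pos : ∀ x ∈ Ω, (g x).PosDef)
    (γ : ℝ → Vec2) (hγ : ContDiff ℝ 2 γ) (hγΩ : ∀ t, γ t ∈ Ω)
    (hτ : ∀ t, deriv γ t ≠ 0)
    (s : ℝ → ℝ)
    (hs : s = fun t => ∫ α in (0:ℝ)..t,
      Real.sqrt (deriv γ α ⬝ᵥ (g (γ α)).mulVec (deriv γ α)))
    (φ : ℝ → ℝ) (hφ : Differentiable ℝ φ)
    (hφs : ∀ t, φ (s t) = t) (hsφ : ∀ r, s (φ r) = r)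
    (μ : ℝ → Vec2) (hμ : μ = γ ∘ φ)
    (T : ℝ → Vec2) (hT : T = deriv μ)
    (κ : ℝ → ℝ)
    (hκ : κ = fun r =>
      (fun k => deriv T r k + ∑ i, ∑ j, Gamma2 g (μ r) i j k * T r i * T r j) ⬝ᵥ
        (g (μ r)).mulVec (gUnitNormal (g (μ r)) (T r))) :
    (∀ r, DifferentiableAt ℝ T r) ∧
    ∀ t, κ (s t) =
      Real.sqrt (g (γ t)).det /
          Real.sqrt (deriv γ t ⬝ᵥ (g (γ t)).mulVec (deriv γ t)) ^ 3 *
        (deriv (deriv γ) t ⬝ᵥ rot2 (deriv γ t) +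
          ∑ i, ∑ j, ∑ k,
            deriv γ t i * deriv γ t j * Gamma2 g (γ t) i j k * rot2 (deriv γ t) k) := by
  have hγ1 : ContDiff ℝ 1 (deriv γ) := by
    have : ContDiff ℝ (1 + 1) γ := by simpa [one_add_one_eq_two] using hγ
    exact (contDiff_succ_iff_deriv.1 this).2.2
  have hγd : Differentiable ℝ γ := hγ.differentiable (by norm_num)
  have hγ1d : Differentiable ℝ (deriv γ) := hγ1.differentiable (by norm_num)
  have hgγ : ∀ i j, Differentiable ℝ (fun t => g (γ t) i j) := by
    intro i j t
    have h1 : DifferentiableAt ℝ (fun y => g y i j) (γ t) :=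
      ((hg i j).differentiableOn (by norm_num)).differentiableAt (hΩ.mem_nhds (hγΩ t))
    exact h1.comp t (hγd t)
  have hci : ∀ i, Differentiable ℝ (fun t => deriv γ t i) := fun i =>
    (differentiable_pi.1 hγ1d) i
  set Q : ℝ → ℝ := fun t => deriv γ t ⬝ᵥ (g (γ t)).mulVec (deriv γ t) with hQ
  have hQd : Differentiable ℝ Q := by
    simp only [hQ, Matrix.mulVec, dotProduct, Fin.sum_univ_two]
    have h0 := hci 0
    have h1 := hci 1
    have h00 := hgγ 0 0
    have h01 := hgγ 0 1
    have h10 := hgγ 1 0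
    have h11 := hgγ 1 1
    exact (h0.mul ((h00.mul h0).add (h01.mul h1))).add
      (h1.mul ((h10.mul h0).add (h11.mul h1)))
  have hQpos : ∀ t, 0 < Q t := by
    intro t
    have := (hg_pos _ (hγΩ t)).dotProduct_mulVec_pos (hτ t)
    rwa [star_trivial] at this
  set q : ℝ → ℝ := fun t => Real.sqrt (Q t) with hq
  have hqpos : ∀ t, 0 < q t := fun t => Real.sqrt_pos.2 (hQpos t)
  have hqd : Differentiable ℝ q := fun t => (hQd t).sqrt (hQpos t).ne'
  have hsd : ∀ t, HasDerivAt s (q t) t := by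
    intro t
    rw [hs]
    exact intervalIntegral.integral_hasDerivAt_right
      (hqd.continuous.intervalIntegrable _ _)
      (hqd.continuous.stronglyMeasurableAtFilter _ _) hqd.continuous.continuousAt
  have hφd : ∀ r, HasDerivAt φ (q (φ r))⁻¹ r := by
    intro r
    have h1 := (hsd (φ r)).comp r (hφ r).hasDerivAt
    have h2 : s ∘ φ = id := funext hsφ
    rw [h2] at h1
    have h3 := h1.unique (hasDerivAt_id r)
    have h4 : deriv φ r = (q (φ r))⁻¹ := eq_inv_of_mul_eq_one_right h3
    rw [← h4]
    exact (hφ r).hasDerivAt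
  have hTeq : T = fun r => (q (φ r))⁻¹ • deriv γ (φ r) := by
    rw [hT, hμ]
    funext r
    exact ((hγd (φ r)).hasDerivAt.scomp r (hφd r)).deriv
  have hTd : ∀ r, ∃ b : ℝ, HasDerivAt T
      (((q (φ r))⁻¹ ^ 2) • deriv (deriv γ) (φ r) + b • deriv γ (φ r)) r := by
    intro r
    have h1 : DifferentiableAt ℝ (fun r => (q (φ r))⁻¹) r :=
      ((hqd (φ r)).comp r (hφ r)).inv (hqpos _).ne'
    have h2 := (hγ1d (φ r)).hasDerivAt.scomp r (hφd r)
    refine ⟨deriv (fun r => (q (φ r))⁻¹) r, ?_⟩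
    rw [hTeq]
    have h3 := h1.hasDerivAt.smul h2
    rw [smul_smul, ← sq] at h3
    exact h3
  refine ⟨fun r => (hTd r).choose_spec.differentiableAt, fun t => ?_⟩
  obtain ⟨b, hb⟩ := hTd (s t)
  have hμt : μ (s t) = γ t := by simp [hμ, hφs]
  have hTt : T (s t) = (q t)⁻¹ • deriv γ t := by simp [hTeq, hφs]
  have hq0 := (hqpos t).ne'
  have hqsq : q t ^ 2 = Q t := Real.sq_sqrt (hQpos t).le
  have hone : Real.sqrt (((q t)⁻¹ • deriv γ t) ⬝ᵥ (g (γ t)).mulVec ((q t)⁻¹ • deriv γ t)) = 1 := by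
    rw [dot_smul_aux]
    change Real.sqrt ((q t)⁻¹ ^ 2 * Q t) = 1
    rw [← hqsq, ← mul_pow, inv_mul_cancel₀ hq0]
    simp
  rw [hφs] at hb
  rw [hκ]
  simp only []
  rw [hb.deriv, hμt, hTt, mulVec_gUnitNormal_aux _ (hg_symm _ (hγΩ t)) (hg_pos _ (hγΩ t)), hone]
  change _ = Real.sqrt (g (γ t)).det / q t ^ 3 * _
  simp only [dotProduct, Fin.sum_univ_two, rot2, Pi.smul_apply, Pi.add_apply, smul_eq_mul,
    Matrix.cons_val_zero, Matrix.cons_val_one]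
  field_simp
  ring
end
end

section
/- Let Ω ⊆ ℝ² be open, σ : Ω → (real 2×2 matrices) be C¹, and let γ : ℝ → Ω be twice differentiable at t₀ with τ(t) := γ'(t) of Euclidean norm 1 for all t; let ν(t) = (−τ²(t), τ¹(t)). Then the function t ↦ ν(t)ᵀ σ(γ(t)) τ(t) is differentiable at t₀ with derivative ν(t₀)ᵀ (D_{τ(t₀)}σ)(γ(t₀)) τ(t₀) + ( ν(t₀)ᵀ σ(γ(t₀)) ν(t₀) − τ(t₀)ᵀ σ(γ(t₀)) τ(t₀) ) · (ν(t₀)·τ'(t₀)), where D_{τ(t₀)}σ denotes the directional derivative of σ in the direction τ(t₀). -/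
noncomputable section

open Matrix BigOperators

/-- derivative of `ν ᵀ σ(γ(t)) τ` along a unit-speed curve. -/
theorem deriv_sigma_nu_tau
    (Ω : Set Vec2) (hΩ : IsOpen Ω)
    (σ : Vec2 → Mat2) (hσ : ∀ i j, ContDiffOn ℝ 1 (fun y => σ y i j) Ω)
    (γ : ℝ → Vec2) (t₀ : ℝ) (hγΩ : ∀ t, γ t ∈ Ω)
    (hγ : Differentiable ℝ γ) (hγ2 : DifferentiableAt ℝ (deriv γ) t₀)
    (hunit : ∀ t, deriv γ t ⬝ᵥ deriv γ t = 1)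
    (τ : ℝ → Vec2) (hτ : τ = deriv γ)
    (ν : ℝ → Vec2) (hν : ν = fun t => rot2 (τ t))
    (Dσ : Mat2)
    (hDσ : Dσ = Matrix.of fun i j => fderiv ℝ (fun y => σ y i j) (γ t₀) (τ t₀)) :
    HasDerivAt (fun t => ν t ⬝ᵥ (σ (γ t)).mulVec (τ t))
      (ν t₀ ⬝ᵥ Dσ.mulVec (τ t₀) +
        (ν t₀ ⬝ᵥ (σ (γ t₀)).mulVec (ν t₀) - τ t₀ ⬝ᵥ (σ (γ t₀)).mulVec (τ t₀)) *
          (ν t₀ ⬝ᵥ deriv τ t₀)) t₀ := by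
  have hσd : ∀ i j, HasDerivAt (fun t => σ (γ t) i j) (Dσ i j) t₀ := by
    intro i j
    have h1 : DifferentiableAt ℝ (fun y => σ y i j) (γ t₀) :=
      ((hσ i j).differentiableOn (by norm_num)).differentiableAt (hΩ.mem_nhds (hγΩ t₀))
    have h2 := h1.hasFDerivAt.comp_hasDerivAt t₀ (hγ t₀).hasDerivAt
    rw [hDσ, hτ]
    exact h2
  have hτd : ∀ i, HasDerivAt (fun t => τ t i) (deriv τ t₀ i) t₀ := by
    have h : HasDerivAt τ (deriv τ t₀) t₀ := by
      rw [hτ]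
      exact hγ2.hasDerivAt
    exact hasDerivAt_pi.1 h
  have hu : ∀ t, τ t 0 * τ t 0 + τ t 1 * τ t 1 = 1 := by
    intro t
    have := hunit t
    rw [← hτ] at this
    simpa [dotProduct, Fin.sum_univ_two] using this
  have hu' := hu t₀
  have horth : τ t₀ 0 * deriv τ t₀ 0 + τ t₀ 1 * deriv τ t₀ 1 = 0 := by
    have h1 := ((hτd 0).mul (hτd 0)).add ((hτd 1).mul (hτd 1))
    have h2 : HasDerivAt (fun _ : ℝ => (1 : ℝ)) 0 t₀ := hasDerivAt_const _ _
    have h3 := h1.unique (h2.congr_of_eventuallyEq (Filter.Eventually.of_forall hu))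
    linarith
  have hmain := (((hτd 1).neg).mul
      (((hσd 0 0).mul (hτd 0)).add ((hσd 0 1).mul (hτd 1)))).add
    ((hτd 0).mul (((hσd 1 0).mul (hτd 0)).add ((hσd 1 1).mul (hτd 1))))
  have hfun : (fun t => ν t ⬝ᵥ (σ (γ t)).mulVec (τ t)) = fun t =>
      -(τ t 1) * (σ (γ t) 0 0 * τ t 0 + σ (γ t) 0 1 * τ t 1) +
        τ t 0 * (σ (γ t) 1 0 * τ t 0 + σ (γ t) 1 1 * τ t 1) := by
    funext t
    simp [hν, rot2, dotProduct, Matrix.mulVec, Fin.sum_univ_two]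
  rw [hfun]
  refine hmain.congr_deriv ?_
  simp only [hν, rot2, dotProduct, Matrix.mulVec, Fin.sum_univ_two, Pi.add_apply, Pi.mul_apply,
    Pi.neg_apply, Matrix.cons_val_zero, Matrix.cons_val_one]
  clear hmain hfun
  generalize deriv τ t₀ 0 = p at *
  generalize deriv τ t₀ 1 = q at *
  generalize τ t₀ 0 = a at *
  generalize τ t₀ 1 = b at *
  obtain ⟨k, hk⟩ : ∃ k, k = -b * p + a * q := ⟨_, rfl⟩
  have hp : p = -b * k := by
    rw [hk]
    linear_combination (-p) * hu' + a * horth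
  have hq : q = a * k := by
    rw [hk]
    linear_combination (-q) * hu' + b * horth
  rw [← hk, hp, hq]
  ring
end
end

section
/- Let Ω ⊆ ℝ² be open, let g, σ : Ω → (symmetric real 2×2 matrices) be C² with g(x) positive definite for all x, and let p ∈ Ω satisfy g(p) = I (identity matrix) and ∂_k g_{ij}(p) = 0 for all i, j, k. Then the covariant incompatibility satisfies (inc_g σ)(p) = inc σ(p) − ½ tr(σ(p)) · inc g(p), where inc is the Euclidean incompatibility and tr the matrix trace. -/
noncomputable section

open Matrix BigOperators

lemma pd_mul_of_zero {a b : Vec2 → ℝ} {p : Vec2} (q : Fin 2)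
    (ha : DifferentiableAt ℝ a p) (hb : DifferentiableAt ℝ b p) (h0 : b p = 0) :
    pd q (fun y => a y * b y) p = a p * pd q b p := by
  unfold pd
  rw [fderiv_fun_mul ha hb]
  simp [h0]

lemma pd_add' {a b : Vec2 → ℝ} {p : Vec2} (q : Fin 2)
    (ha : DifferentiableAt ℝ a p) (hb : DifferentiableAt ℝ b p) :
    pd q (fun y => a y + b y) p = pd q a p + pd q b p := by
  unfold pd
  rw [fderiv_fun_add ha hb]
  simp

lemma pd_differentiableAt {f : Vec2 → ℝ} {p : Vec2} (hf : ContDiffAt ℝ 2 f p) (i : Fin 2) :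
    DifferentiableAt ℝ (pd i f) p := by
  have h1 : ContDiffAt ℝ 1 (fderiv ℝ f) p := hf.fderiv_right (by norm_num)
  exact (h1.differentiableAt (by norm_num)).clm_apply (differentiableAt_const _)

lemma pd_comm' {f : Vec2 → ℝ} {p : Vec2} (hf : ContDiffAt ℝ 2 f p) (i j : Fin 2) :
    pd i (pd j f) p = pd j (pd i f) p := by
  have h1 : ContDiffAt ℝ 1 (fderiv ℝ f) p := hf.fderiv_right (by norm_num)
  have hd := h1.differentiableAt (by norm_num)
  have key : ∀ a b : Fin 2, pd a (pd b f) p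
      = fderiv ℝ (fderiv ℝ f) p (Pi.single a 1) (Pi.single b 1) := by
    intro a b
    unfold pd
    rw [fderiv_clm_apply hd (differentiableAt_const _)]
    simp
  rw [key, key]
  exact (hf.isSymmSndFDerivAt (by simp)).eq _ _

lemma pd_gamma {a b c : Vec2 → ℝ} {p : Vec2} (q : Fin 2)
    (ha : DifferentiableAt ℝ a p) (hb : DifferentiableAt ℝ b p) (hc : DifferentiableAt ℝ c p) :
    pd q (fun y => (a y + b y - c y) / 2) p = (pd q a p + pd q b p - pd q c p) / 2 := by
  have h := (((ha.hasFDerivAt.add hb.hasFDerivAt).sub hc.hasFDerivAt).mul_const (2⁻¹ : ℝ)).fderiv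
  unfold pd
  simp only [div_eq_mul_inv]
  erw [h]
  simp
  ring

lemma pd_congr' {f h : Vec2 → ℝ} {p : Vec2} (q : Fin 2) (e : f =ᶠ[nhds p] h) :
    pd q f p = pd q h p := by
  unfold pd
  rw [e.fderiv_eq]

lemma pd_congr2 {f h : Vec2 → ℝ} {p : Vec2} (q r : Fin 2) (e : f =ᶠ[nhds p] h) :
    pd q (pd r f) p = pd q (pd r h) p := by
  apply pd_congr'
  filter_upwards [e.eventuallyEq_nhds] with y hy
  exact pd_congr' r hy

lemma inv_entry_differentiableAt {g : Vec2 → Mat2} {p : Vec2}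
    (hg : ∀ i j, DifferentiableAt ℝ (fun y => g y i j) p) (hgp : g p = 1) (k l : Fin 2) :
    DifferentiableAt ℝ (fun y => (g y)⁻¹ k l) p := by
  have h00 := hg 0 0
  have h01 := hg 0 1
  have h10 := hg 1 0
  have h11 := hg 1 1
  have hdet : DifferentiableAt ℝ (fun y => (g y 0 0 * g y 1 1 - g y 0 1 * g y 1 0)⁻¹) p := by
    apply DifferentiableAt.fun_inv
    · exact (h00.fun_mul h11).fun_sub (h01.fun_mul h10)
    · simp [hgp]
  simp only [Matrix.inv_def, Matrix.det_fin_two, Matrix.adjugate_fin_two, Ring.inverse_eq_inv']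
  fin_cases k <;> fin_cases l <;> simp <;> fun_prop

/-- covariant incompatibility in Riemann normal coordinates. -/
theorem incg_normal_coords
    (Ω : Set Vec2) (hΩ : IsOpen Ω)
    (g σ : Vec2 → Mat2)
    (hg : ∀ i j, ContDiffOn ℝ 2 (fun y => g y i j) Ω)
    (hσ : ∀ i j, ContDiffOn ℝ 2 (fun y => σ y i j) Ω)
    (hg_symm : ∀ x ∈ Ω, (g x).IsSymm) (hσ_symm : ∀ x ∈ Ω, (σ x).IsSymm)
    (hg_pos : ∀ x ∈ Ω, (g x).PosDef)
    (p : Vec2) (hp : p ∈ Ω) (hgp : g p = 1)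
    (hdg : ∀ i j k, pd k (fun y => g y i j) p = 0) :
    incg g σ p = incE σ p - 1 / 2 * (σ p).trace * incE g p := by
  have hn : Ω ∈ nhds p := hΩ.mem_nhds hp
  have hgA : ∀ i j, ContDiffAt ℝ 2 (fun y => g y i j) p := fun i j => (hg i j).contDiffAt hn
  have hσA : ∀ i j, ContDiffAt ℝ 2 (fun y => σ y i j) p := fun i j => (hσ i j).contDiffAt hn
  have hgD : ∀ i j, DifferentiableAt ℝ (fun y => g y i j) p :=
    fun i j => (hgA i j).differentiableAt (by norm_num)
  have hσD : ∀ i j, DifferentiableAt ℝ (fun y => σ y i j) p :=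
    fun i j => (hσA i j).differentiableAt (by norm_num)
  have hG1 : ∀ i j l, Gamma1 g p i j l = 0 := by
    intro i j l
    simp [Gamma1, hdg]
  have hG2 : ∀ i j l, Gamma2 g p i j l = 0 := by
    intro i j l
    simp [Gamma2, hG1]
  have hpp : ∀ k i j, DifferentiableAt ℝ (pd k (fun y => g y i j)) p :=
    fun k i j => pd_differentiableAt (hgA i j) k
  have hG1D : ∀ i j l, DifferentiableAt ℝ (fun y => Gamma1 g y i j l) p := by
    intro i j l
    simp only [Gamma1, div_eq_mul_inv]
    exact (((hpp i j l).fun_add (hpp j l i)).fun_sub (hpp l i j)).mul_const (2⁻¹ : ℝ)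
  have hID := inv_entry_differentiableAt hgD hgp
  have hG2D : ∀ i j l, DifferentiableAt ℝ (fun y => Gamma2 g y i j l) p := by
    intro i j l
    simp only [Gamma2, Fin.sum_univ_two]
    exact ((hID l 0).fun_mul (hG1D i j 0)).fun_add ((hID l 1).fun_mul (hG1D i j 1))
  have hdG1 : ∀ q i j l, pd q (fun y => Gamma1 g y i j l) p
      = (pd q (pd i (fun y => g y j l)) p + pd q (pd j (fun y => g y l i)) p
        - pd q (pd l (fun y => g y i j)) p) / 2 := by
    intro q i j l
    exact pd_gamma q (hpp i j l) (hpp j l i) (hpp l i j)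
  have hdG2 : ∀ q i j l, pd q (fun y => Gamma2 g y i j l) p
      = pd q (fun y => Gamma1 g y i j l) p := by
    intro q i j l
    simp only [Gamma2, Fin.sum_univ_two]
    rw [pd_add' q ((hID l 0).fun_mul (hG1D i j 0)) ((hID l 1).fun_mul (hG1D i j 1)),
      pd_mul_of_zero q (hID l 0) (hG1D i j 0) (hG1 i j 0),
      pd_mul_of_zero q (hID l 1) (hG1D i j 1) (hG1 i j 1), hgp]
    fin_cases l <;> simp
  have hprod : ∀ q j i k, pd q (fun y => ∑ m, Gamma2 g y j i m * σ y m k) p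
      = ∑ m, σ p m k * pd q (fun y => Gamma1 g y j i m) p := by
    intro q j i k
    simp only [Fin.sum_univ_two, mul_comm (Gamma2 g _ _ _ _)]
    rw [pd_add' q ((hσD 0 k).fun_mul (hG2D j i 0)) ((hσD 1 k).fun_mul (hG2D j i 1)),
      pd_mul_of_zero q (hσD 0 k) (hG2D j i 0) (hG2 j i 0),
      pd_mul_of_zero q (hσD 1 k) (hG2D j i 1) (hG2 j i 1), hdG2, hdG2]
  have hgs : ∀ q r, pd q (pd r (fun y => g y 1 0)) p = pd q (pd r (fun y => g y 0 1)) p := by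
    intro q r
    apply pd_congr2
    filter_upwards [hn] with y hy
    exact (hg_symm y hy).apply 0 1
  have hσs : ∀ q r, pd q (pd r (fun y => σ y 1 0)) p = pd q (pd r (fun y => σ y 0 1)) p := by
    intro q r
    apply pd_congr2
    filter_upwards [hn] with y hy
    exact (hσ_symm y hy).apply 0 1
  have hcg : ∀ i j, pd 1 (pd 0 (fun y => g y i j)) p = pd 0 (pd 1 (fun y => g y i j)) p :=
    fun i j => pd_comm' (hgA i j) 1 0
  have hcσ : ∀ i j, pd 1 (pd 0 (fun y => σ y i j)) p = pd 0 (pd 1 (fun y => σ y i j)) p :=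
    fun i j => pd_comm' (hσA i j) 1 0
  unfold incg incE
  simp only [hprod, hG2, hdG1, hgp]
  simp only [Fin.sum_univ_two, Matrix.trace, Matrix.diag, hcg, hcσ, hgs, hσs, eps2,
    Matrix.det_one]
  norm_num
  ring
end
end

section
/- Let Ω ⊆ ℝ² be open, let g, σ : Ω → (symmetric real 2×2 matrices) be C¹ with g(x) positive definite for all x, and let γ : ℝ → Ω be C² with |γ'(t)| = 1 (Euclidean norm) for all t. Fix t₀ and write q = γ(t₀), τ = γ'(t₀), τ̇ = γ''(t₀), and let ν be the Euclidean rotated normal of τ. For small s define F(s) = ( √(det((g+sσ)(q))) / (τᵀ (g+sσ)(q) τ) ) · ( τ̇·ν + τ^i τ^j Γ^k_{ij}(g+sσ)(q) δ_{kl} ν^l ), which is the geodesic curvature density κ(g+sσ)·√((g+sσ)_{ττ}) of the metric g+sσ along γ at q. Let τ̂(t) = γ'(t)/√(γ'(t)ᵀ g(γ(t)) γ'(t)) and let n̂(t) be the g-unit normal of γ'(t) computed with g(γ(t)). Then F is differentiable at s = 0 with F'(0) = ½ [ (curl_g σ)(q)·τ + d/dt|_{t=t₀} ( τ̂(t)ᵀ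 σ(γ(t)) n̂(t) ) ], where (curl_g σ)(q)·τ = (curl_g σ)_i(q) τ^i. (First variation of the geodesic curvature density in the direction σ.) -/
noncomputable section

open Matrix BigOperators

lemma alg (a b c a0 a1 b0 b1 c0 c1 A B C A0 A1 B0 B1 C0 C1 u v k d T D : ℝ)
  (hd0 : d ≠ 0) (hT0 : T ≠ 0) (hd : d = a*c-b^2) (hT : T = a*u^2+2*b*u*v+c*v^2) 
  (d' T' N N' dt Tt P Pt : ℝ)
  (hd' : d' = A*c+a*C-2*b*B) (hT' : T' = A*u^2+2*B*u*v+C*v^2)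
  (hN : N = (u^2*(a0/2)+2*u*v*(a1/2)+v^2*(b1-c0/2))*(-c*v-b*u) + (u^2*(b0-a1/2)+2*u*v*(c0/2)+v^2*(c1/2))*(b*v+a*u))
  (hN' : N' = (u^2*(A0/2)+2*u*v*(A1/2)+v^2*(B1-C0/2))*(-c*v-b*u) + (u^2*(B0-A1/2)+2*u*v*(C0/2)+v^2*(C1/2))*(b*v+a*u)
    + (u^2*(a0/2)+2*u*v*(a1/2)+v^2*(b1-c0/2))*(-C*v-B*u) + (u^2*(b0-a1/2)+2*u*v*(c0/2)+v^2*(c1/2))*(B*v+A*u))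
  (hP : P = (u*A+v*B)*(-c*v-b*u)+(u*B+v*C)*(b*v+a*u))
  (hdt : dt = (a0*u+a1*v)*c+a*(c0*u+c1*v)-2*b*(b0*u+b1*v))
  (hTt : Tt = (a0*u+a1*v)*u^2+2*(b0*u+b1*v)*u*v+(c0*u+c1*v)*v^2 + 2*a*u*(-k*v)+2*b*((-k*v)*v+u*(k*u))+2*c*v*(k*u))
  (hPt : Pt = (-k*v*A+u*(A0*u+A1*v)+k*u*B+v*(B0*u+B1*v))*(-c*v-b*u)+(-k*v*B+u*(B0*u+B1*v)+k*u*C+v*(C0*u+C1*v))*(b*v+a*u)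
    + (u*A+v*B)*(-(c0*u+c1*v)*v-c*(k*u)-(b0*u+b1*v)*u-b*(-k*v))+(u*B+v*C)*((b0*u+b1*v)*v+b*(k*u)+(a0*u+a1*v)*u+a*(-k*v))) :
  (d'*D/(2*d)/T - D*T'/T^2)*(k*(u^2+v^2)+N/d) + D/T*(N'/d-N*d'/d^2)
  = 1/2*( D/d*(
     u * ((B0 - A1) - (((c*(a0/2)-b*(b0-a1/2))/d*B + (-b*(a0/2)+a*(b0-a1/2))/d*C) - ((c*(a1/2)-b*(c0/2))/d*A + (-b*(a1/2)+a*(c0/2))/d*B)))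
    + v * ((C0 - B1) - (((c*(a1/2)-b*(c0/2))/d*B + (-b*(a1/2)+a*(c0/2))/d*C) - ((c*(b1-c0/2)-b*(c1/2))/d*A + (-b*(b1-c0/2)+a*(c1/2))/d*B))))
   + (Pt*D/(d*T) - P*D*(dt/(2*d^2*T)+Tt/(d*T^2)))) := by
  field_simp
  subst hd' hT' hN hN' hP hdt hTt hPt
  rw [hd, hT]
  ring

lemma inv2 (M : Mat2) : M⁻¹ = M.det⁻¹ • !![M 1 1, -M 0 1; -M 1 0, M 0 0] := by
  rw [Matrix.inv_def, Matrix.adjugate_fin_two, Ring.inverse_eq_inv']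

lemma pair_eq (g σ : Mat2) (hs : g 1 0 = g 0 1) (hs' : σ 1 0 = σ 0 1) (τ : Vec2)
    (hd : 0 < g.det) (hT : 0 < τ ⬝ᵥ g.mulVec τ) :
    gUnitTangent g τ ⬝ᵥ σ.mulVec (gUnitNormal g τ) =
    ((τ 0 * σ 0 0 + τ 1 * σ 0 1) * (-g 1 1 * τ 1 - g 0 1 * τ 0) +
      (τ 0 * σ 0 1 + τ 1 * σ 1 1) * (g 0 1 * τ 1 + g 0 0 * τ 0)) /
    (Real.sqrt (g 0 0 * g 1 1 - g 0 1 ^ 2) *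
      (g 0 0 * τ 0 ^ 2 + 2 * g 0 1 * τ 0 * τ 1 + g 1 1 * τ 1 ^ 2)) := by
  have hde : g.det = g 0 0 * g 1 1 - g 0 1 ^ 2 := by
    rw [Matrix.det_fin_two, hs]; ring
  have hTe : τ ⬝ᵥ g.mulVec τ = g 0 0 * τ 0 ^ 2 + 2 * g 0 1 * τ 0 * τ 1 + g 1 1 * τ 1 ^ 2 := by
    simp [dotProduct, mulVec, Fin.sum_univ_two, hs]; ring
  have hn : gNormal g τ = g.det⁻¹ • ![-g 1 1 * τ 1 - g 0 1 * τ 0, g 0 1 * τ 1 + g 0 0 * τ 0] := by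
    funext k
    fin_cases k <;> simp [gNormal, inv2, eps2, Fin.sum_univ_two, hs] <;> ring
  have hnn : gNormal g τ ⬝ᵥ g.mulVec (gNormal g τ) = (τ ⬝ᵥ g.mulVec τ) / g.det := by
    rw [hn, hTe]
    have h0 := hd.ne'
    simp only [dotProduct, mulVec, Fin.sum_univ_two, hs, Pi.smul_apply, smul_eq_mul,
      Matrix.cons_val_zero, Matrix.cons_val_one]
    field_simp
    rw [hde]; ring
  unfold gUnitTangent gUnitNormal
  rw [hnn, hn, Real.sqrt_div hT.le, ← hTe, ← hde]
  have h1 := Real.sq_sqrt hd.le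
  have h2 := Real.sq_sqrt hT.le
  have h3 := (Real.sqrt_pos.2 hd).ne'
  have h4 := (Real.sqrt_pos.2 hT).ne'
  simp only [dotProduct, mulVec, Fin.sum_univ_two, hs', Pi.smul_apply, smul_eq_mul,
      Matrix.cons_val_zero, Matrix.cons_val_one] at h2 h4 ⊢
  generalize hS : Real.sqrt g.det = S at *
  generalize hR : Real.sqrt (τ 0 * (g 0 0 * τ 0 + g 0 1 * τ 1) + τ 1 * (g 1 0 * τ 0 + g 1 1 * τ 1)) = R at *
  rw [← h1, ← h2]
  field_simp
  try ring

lemma chain2 (f : Vec2 → ℝ) (γ : ℝ → Vec2) (t : ℝ) (hf : DifferentiableAt ℝ f (γ t))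
    (τ : Vec2) (hγ : HasDerivAt γ τ t) :
    HasDerivAt (fun s => f (γ s)) (pd 0 f (γ t) * τ 0 + pd 1 f (γ t) * τ 1) t := by
  have h := hf.hasFDerivAt.comp_hasDerivAt t hγ
  refine h.congr_deriv ?_
  have e : τ = τ 0 • (Pi.single 0 1 : Vec2) + τ 1 • (Pi.single 1 1 : Vec2) := by
    funext k; fin_cases k <;> simp
  have h2 := congrArg (fderiv ℝ f (γ t)) e
  rw [map_add, map_smul, map_smul] at h2
  rw [h2]
  simp only [pd, smul_eq_mul]; ring


lemma linS (x y : ℝ) : HasDerivAt (fun s : ℝ => x + s * y) y 0 := by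
  simpa using ((hasDerivAt_id (0 : ℝ)).mul_const y).const_add x

lemma derS (d T N : ℝ → ℝ) (K d0 T0 N0 d' T' N' : ℝ) (hd : HasDerivAt d d' 0)
    (hT : HasDerivAt T T' 0) (hN : HasDerivAt N N' 0) (ed : d 0 = d0) (eT : T 0 = T0)
    (eN : N 0 = N0) (hd0 : 0 < d0) (hT0 : T0 ≠ 0) :
    HasDerivAt (fun s => Real.sqrt (d s) / T s * (K + N s / d s))
      ((d'*Real.sqrt d0/(2*d0)/T0 - Real.sqrt d0*T'/T0^2)*(K+N0/d0)
        + Real.sqrt d0/T0*(N'/d0-N0*d'/d0^2)) 0 := by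
  subst ed eT eN
  have h := ((hd.sqrt hd0.ne').div hT hT0).mul ((hN.div hd hd0.ne').const_add K)
  refine h.congr_deriv ?_
  have h1 := Real.sq_sqrt hd0.le
  have h2 := (Real.sqrt_pos.2 hd0).ne'
  simp only [Pi.div_apply]
  generalize Real.sqrt (d 0) = D at *
  rw [← h1]
  field_simp

lemma derT (d T P : ℝ → ℝ) (t d0 T0 P0 d' T' P' : ℝ) (hd : HasDerivAt d d' t)
    (hT : HasDerivAt T T' t) (hP : HasDerivAt P P' t) (ed : d t = d0) (eT : T t = T0)
    (eP : P t = P0) (hd0 : 0 < d0) (hT0 : T0 ≠ 0) :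
    HasDerivAt (fun s => P s / (Real.sqrt (d s) * T s))
      (P'*Real.sqrt d0/(d0*T0) - P0*Real.sqrt d0*(d'/(2*d0^2*T0)+T'/(d0*T0^2))) t := by
  subst ed eT eP
  have h2 := (Real.sqrt_pos.2 hd0).ne'
  have h := hP.div ((hd.sqrt hd0.ne').mul hT) (mul_ne_zero h2 hT0)
  refine h.congr_deriv ?_
  have h1 := Real.sq_sqrt hd0.le
  simp only [Pi.mul_apply]
  generalize Real.sqrt (d t) = D at *
  rw [← h1]
  field_simp
  try ring

lemma curl_eq (g σ : Vec2 → Mat2) (q τ : Vec2)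
    (sg : g q 1 0 = g q 0 1) (sσ : σ q 1 0 = σ q 0 1)
    (pg : ∀ i, pd i (fun y => g y 1 0) q = pd i (fun y => g y 0 1) q)
    (pσ : ∀ i, pd i (fun y => σ y 1 0) q = pd i (fun y => σ y 0 1) q)
    (a b c a0 a1 b0 b1 c0 c1 A B C A0 A1 B0 B1 C0 C1 d : ℝ)
    (ha : g q 0 0 = a) (hb : g q 0 1 = b) (hc : g q 1 1 = c)
    (ha0 : pd 0 (fun y => g y 0 0) q = a0) (ha1 : pd 1 (fun y => g y 0 0) q = a1)
    (hb0 : pd 0 (fun y => g y 0 1) q = b0) (hb1 : pd 1 (fun y => g y 0 1) q = b1)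
    (hc0 : pd 0 (fun y => g y 1 1) q = c0) (hc1 : pd 1 (fun y => g y 1 1) q = c1)
    (hA : σ q 0 0 = A) (hB : σ q 0 1 = B) (hC : σ q 1 1 = C)
    (hA0 : pd 0 (fun y => σ y 0 0) q = A0) (hA1 : pd 1 (fun y => σ y 0 0) q = A1)
    (hB0 : pd 0 (fun y => σ y 0 1) q = B0) (hB1 : pd 1 (fun y => σ y 0 1) q = B1)
    (hC0 : pd 0 (fun y => σ y 1 1) q = C0) (hC1 : pd 1 (fun y => σ y 1 1) q = C1)
    (hd : (g q).det = d) :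
    (∑ i, curlg g σ q i * τ i) = Real.sqrt d/d*(
     τ 0 * ((B0 - A1) - (((c*(a0/2)-b*(b0-a1/2))/d*B + (-b*(a0/2)+a*(b0-a1/2))/d*C) - ((c*(a1/2)-b*(c0/2))/d*A + (-b*(a1/2)+a*(c0/2))/d*B)))
    + τ 1 * ((C0 - B1) - (((c*(a1/2)-b*(c0/2))/d*B + (-b*(a1/2)+a*(c0/2))/d*C) - ((c*(b1-c0/2)-b*(c1/2))/d*A + (-b*(b1-c0/2)+a*(c1/2))/d*B)))) := by
  rw [Real.sqrt_div_self', one_div]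
  simp only [curlg, Gamma2, Gamma1, Fin.sum_univ_two, inv2, hd, pg, pσ, sσ, hA, hB, hC, hA0, hA1, hB0,
    hB1, hC0, hC1, ha0, ha1, hb0, hb1, hc0, hc1, eps2]
  simp [sg, ha, hb, hc]
  ring

lemma pd_lin (i : Fin 2) (f h : Vec2 → ℝ) (x : Vec2) (s : ℝ) (hf : DifferentiableAt ℝ f x)
    (hh : DifferentiableAt ℝ h x) : pd i (fun y => f y + s * h y) x = pd i f x + s * pd i h x := by
  unfold pd
  have := (hf.hasFDerivAt.add (hh.hasFDerivAt.const_mul s)).fderiv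
  have e : (fun y => f y + s * h y) = f + fun y => s * h y := rfl
  rw [e, this]; simp

lemma pd_symm (Ω : Set Vec2) (hΩ : IsOpen Ω) (g : Vec2 → Mat2) (hs : ∀ x ∈ Ω, (g x).IsSymm)
    (x : Vec2) (hx : x ∈ Ω) (i : Fin 2) : pd i (fun y => g y 1 0) x = pd i (fun y => g y 0 1) x := by
  unfold pd
  rw [Filter.EventuallyEq.fderiv_eq]
  filter_upwards [hΩ.mem_nhds hx] with y hy
  exact (hs y hy).apply 0 1

/-- first variation of the geodesic curvature density. -/
theorem firstVariation_geodesicCurvature_density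
    (Ω : Set Vec2) (hΩ : IsOpen Ω)
    (g σ : Vec2 → Mat2)
    (hg : ∀ i j, ContDiffOn ℝ 1 (fun y => g y i j) Ω)
    (hσ : ∀ i j, ContDiffOn ℝ 1 (fun y => σ y i j) Ω)
    (hg_symm : ∀ x ∈ Ω, (g x).IsSymm) (hσ_symm : ∀ x ∈ Ω, (σ x).IsSymm)
    (hg_pos : ∀ x ∈ Ω, (g x).PosDef)
    (γ : ℝ → Vec2) (hγ : ContDiff ℝ 2 γ) (hγΩ : ∀ t, γ t ∈ Ω)
    (hunit : ∀ t, deriv γ t ⬝ᵥ deriv γ t = 1)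
    (t₀ : ℝ) (q τ τdot ν : Vec2)
    (hq : q = γ t₀) (hτ : τ = deriv γ t₀)
    (hτdot : τdot = deriv (deriv γ) t₀) (hν : ν = rot2 τ)
    (F : ℝ → ℝ)
    (hF : F = fun s =>
      Real.sqrt (g q + s • σ q).det / (τ ⬝ᵥ (g q + s • σ q).mulVec τ) *
        (τdot ⬝ᵥ ν +
          ∑ i, ∑ j, ∑ k, τ i * τ j * Gamma2 (fun y => g y + s • σ y) q i j k * ν k)) :
    HasDerivAt F
      (1 / 2 * ((∑ i, curlg g σ q i * τ i) +
        deriv (fun t => gUnitTangent (g (γ t)) (deriv γ t) ⬝ᵥ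
          (σ (γ t)).mulVec (gUnitNormal (g (γ t)) (deriv γ t))) t₀)) 0 := by
  have hqΩ : q ∈ Ω := hq ▸ hγΩ t₀
  have dg : ∀ i j, DifferentiableAt ℝ (fun y => g y i j) q := fun i j =>
    ((hg i j).contDiffAt (hΩ.mem_nhds hqΩ)).differentiableAt (by norm_num)
  have dσ : ∀ i j, DifferentiableAt ℝ (fun y => σ y i j) q := fun i j =>
    ((hσ i j).contDiffAt (hΩ.mem_nhds hqΩ)).differentiableAt (by norm_num)
  have sg : ∀ x ∈ Ω, g x 1 0 = g x 0 1 := fun x hx => (hg_symm x hx).apply 0 1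
  have sσ : ∀ x ∈ Ω, σ x 1 0 = σ x 0 1 := fun x hx => (hσ_symm x hx).apply 0 1
  have pg := pd_symm Ω hΩ g hg_symm q hqΩ
  have pσ := pd_symm Ω hΩ σ hσ_symm q hqΩ
  have hdp : ∀ x ∈ Ω, 0 < (g x).det := fun x hx => (hg_pos x hx).det_pos
  have hTp : ∀ t, 0 < deriv γ t ⬝ᵥ (g (γ t)).mulVec (deriv γ t) := by
    intro t
    have hne : deriv γ t ≠ 0 := by
      intro h0
      have := hunit t
      simp [h0] at this
    have := (hg_pos _ (hγΩ t)).dotProduct_mulVec_pos hne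
    simpa using this
  have hde : ∀ x ∈ Ω, (g x).det = g x 0 0 * g x 1 1 - g x 0 1 ^ 2 := by
    intro x hx
    rw [Matrix.det_fin_two, sg x hx]; ring
  have hfun : (fun t => gUnitTangent (g (γ t)) (deriv γ t) ⬝ᵥ
          (σ (γ t)).mulVec (gUnitNormal (g (γ t)) (deriv γ t))) = _ :=
    funext fun t => pair_eq (g (γ t)) (σ (γ t)) (sg _ (hγΩ t)) (sσ _ (hγΩ t)) (deriv γ t)
      (hdp _ (hγΩ t)) (hTp t)
  rw [hfun]
  have hγ1 : HasDerivAt γ τ t₀ := by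
    rw [hτ]; exact (hγ.differentiable (by norm_num) t₀).hasDerivAt
  have hγ2 : HasDerivAt (deriv γ) τdot t₀ := by
    rw [hτdot]
    have : ContDiff ℝ 1 (deriv γ) := by
      have h2 : ContDiff ℝ (1 + 1) γ := by simpa [one_add_one_eq_two] using hγ
      exact (contDiff_succ_iff_deriv.1 h2).2.2
    exact (this.differentiable (by norm_num) t₀).hasDerivAt
  have hu := hasDerivAt_pi.1 hγ2 0
  have hv := hasDerivAt_pi.1 hγ2 1
  have hun := hunit t₀
  have huu : τ 0 * τdot 0 + τ 1 * τdot 1 = 0 := by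
    have h1 := (hu.mul hu).add (hv.mul hv)
    have h2 : (fun t => deriv γ t 0) * (fun t => deriv γ t 0) +
        (fun t => deriv γ t 1) * (fun t => deriv γ t 1) = fun _ => (1 : ℝ) := by
      funext t
      have := hunit t
      simpa [dotProduct, Fin.sum_univ_two] using this
    rw [h2] at h1
    have := h1.unique (hasDerivAt_const t₀ (1 : ℝ))
    rw [← hτ] at this
    linarith
  have hTq := hTp t₀
  rw [← hτ, ← hq] at hTq
  rw [← hτ] at hun
  have hdq := hdp q hqΩ
  rw [hde q hqΩ] at hdq
  have hTe : τ ⬝ᵥ (g q).mulVec τ =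
      g q 0 0 * τ 0 ^ 2 + 2 * g q 0 1 * τ 0 * τ 1 + g q 1 1 * τ 1 ^ 2 := by
    simp [dotProduct, mulVec, Fin.sum_univ_two, sg q hqΩ]; ring
  rw [hTe] at hTq
  obtain ⟨k, hk⟩ : ∃ k, k = τ 0 * τdot 1 - τ 1 * τdot 0 := ⟨_, rfl⟩
  have hun' : τ 0 ^ 2 + τ 1 ^ 2 = 1 := by
    simp [dotProduct, Fin.sum_univ_two] at hun; linarith
  have hu' : τdot 0 = -k * τ 1 := by
    rw [hk]; linear_combination (-τdot 0) * hun' + τ 0 * huu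
  have hv' : τdot 1 = k * τ 0 := by
    rw [hk]; linear_combination (-τdot 1) * hun' + τ 1 * huu
  rw [hu'] at hu
  rw [hv'] at hv
  have cg : ∀ i j, HasDerivAt (fun t => g (γ t) i j)
      (pd 0 (fun y => g y i j) q * τ 0 + pd 1 (fun y => g y i j) q * τ 1) t₀ := by
    intro i j
    have := chain2 (fun y => g y i j) γ t₀ (hq ▸ dg i j) τ hγ1
    rwa [← hq] at this
  have cσ : ∀ i j, HasDerivAt (fun t => σ (γ t) i j)
      (pd 0 (fun y => σ y i j) q * τ 0 + pd 1 (fun y => σ y i j) q * τ 1) t₀ := by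
    intro i j
    have := chain2 (fun y => σ y i j) γ t₀ (hq ▸ dσ i j) τ hγ1
    rwa [← hq] at this
  -- scalar form of F
  have hFs : F = fun s =>
      Real.sqrt ((g q 0 0 + s * σ q 0 0) * (g q 1 1 + s * σ q 1 1) - (g q 0 1 + s * σ q 0 1) ^ 2) /
        ((g q 0 0 + s * σ q 0 0) * τ 0 ^ 2 + 2 * (g q 0 1 + s * σ q 0 1) * τ 0 * τ 1 +
          (g q 1 1 + s * σ q 1 1) * τ 1 ^ 2) *
      (k * (τ 0 ^ 2 + τ 1 ^ 2) +
       ((τ 0 ^ 2 * ((pd 0 (fun y => g y 0 0) q + s * pd 0 (fun y => σ y 0 0) q) / 2)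
         + 2 * τ 0 * τ 1 * ((pd 1 (fun y => g y 0 0) q + s * pd 1 (fun y => σ y 0 0) q) / 2)
         + τ 1 ^ 2 * ((pd 1 (fun y => g y 0 1) q + s * pd 1 (fun y => σ y 0 1) q)
            - (pd 0 (fun y => g y 1 1) q + s * pd 0 (fun y => σ y 1 1) q) / 2)) *
          (-(g q 1 1 + s * σ q 1 1) * τ 1 - (g q 0 1 + s * σ q 0 1) * τ 0)
        + (τ 0 ^ 2 * ((pd 0 (fun y => g y 0 1) q + s * pd 0 (fun y => σ y 0 1) q)
            - (pd 1 (fun y => g y 0 0) q + s * pd 1 (fun y => σ y 0 0) q) / 2)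
         + 2 * τ 0 * τ 1 * ((pd 0 (fun y => g y 1 1) q + s * pd 0 (fun y => σ y 1 1) q) / 2)
         + τ 1 ^ 2 * ((pd 1 (fun y => g y 1 1) q + s * pd 1 (fun y => σ y 1 1) q) / 2)) *
          ((g q 0 1 + s * σ q 0 1) * τ 1 + (g q 0 0 + s * σ q 0 0) * τ 0)) /
        ((g q 0 0 + s * σ q 0 0) * (g q 1 1 + s * σ q 1 1) - (g q 0 1 + s * σ q 0 1) ^ 2)) := by
    rw [hF]
    funext s
    have e1 : (g q + s • σ q).det =
        (g q 0 0 + s * σ q 0 0) * (g q 1 1 + s * σ q 1 1) - (g q 0 1 + s * σ q 0 1) ^ 2 := by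
      rw [Matrix.det_fin_two]
      simp [sg q hqΩ, sσ q hqΩ]; ring
    have e2 : τ ⬝ᵥ (g q + s • σ q).mulVec τ =
        (g q 0 0 + s * σ q 0 0) * τ 0 ^ 2 + 2 * (g q 0 1 + s * σ q 0 1) * τ 0 * τ 1 +
          (g q 1 1 + s * σ q 1 1) * τ 1 ^ 2 := by
      simp [dotProduct, mulVec, Fin.sum_univ_two, sg q hqΩ, sσ q hqΩ]; ring
    have e3 : τdot ⬝ᵥ ν = k * (τ 0 ^ 2 + τ 1 ^ 2) := by
      rw [hν]; simp [dotProduct, rot2, Fin.sum_univ_two, hu', hv']; ring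
    have e4 : ∀ i j l, pd i (fun y => (g y + s • σ y) j l) q =
        pd i (fun y => g y j l) q + s * pd i (fun y => σ y j l) q := fun i j l =>
      pd_lin i _ _ q s (dg j l) (dσ j l)
    rw [e1, e2, e3]
    congr 2
    rw [hν]
    simp only [Gamma2, Gamma1, Fin.sum_univ_two, e4, inv2, e1, pg, pσ, rot2]
    simp [sg q hqΩ, sσ q hqΩ]
    ring
  -- derivative in s
  have L : ∀ x y : ℝ, HasDerivAt (fun s : ℝ => x + s * y) y 0 := by
    intro x y
    simpa using ((hasDerivAt_id (0 : ℝ)).mul_const y).const_add x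
  have hsq : Real.sqrt (g q 0 0 * g q 1 1 - g q 0 1 ^ 2) ^ 2 = g q 0 0 * g q 1 1 - g q 0 1 ^ 2 :=
    Real.sq_sqrt hdq.le
  rw [hFs]
  have main := alg (g q 0 0) (g q 0 1) (g q 1 1)
    (pd 0 (fun y => g y 0 0) q) (pd 1 (fun y => g y 0 0) q)
    (pd 0 (fun y => g y 0 1) q) (pd 1 (fun y => g y 0 1) q)
    (pd 0 (fun y => g y 1 1) q) (pd 1 (fun y => g y 1 1) q)
    (σ q 0 0) (σ q 0 1) (σ q 1 1)
    (pd 0 (fun y => σ y 0 0) q) (pd 1 (fun y => σ y 0 0) q)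
    (pd 0 (fun y => σ y 0 1) q) (pd 1 (fun y => σ y 0 1) q)
    (pd 0 (fun y => σ y 1 1) q) (pd 1 (fun y => σ y 1 1) q)
    (τ 0) (τ 1) k _ _ (Real.sqrt (g q 0 0 * g q 1 1 - g q 0 1 ^ 2)) hdq.ne' hTq.ne' rfl rfl
    _ _ _ _ _ _ _ _ rfl rfl rfl rfl rfl rfl rfl rfl
  have hS0 := (Real.sqrt_pos.2 hdq).ne'
  rw [curl_eq g σ q τ (sg q hqΩ) (sσ q hqΩ) pg pσ _ _ _ _ _ _ _ _ _ _ _ _ _ _ _ _ _ _ _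
    rfl rfl rfl rfl rfl rfl rfl rfl rfl rfl rfl rfl rfl rfl rfl rfl rfl rfl (hde q hqΩ)]
  have hD := derT _ _ _ t₀ _ _ _ _ _ _
    (((cg 0 0).mul (cg 1 1)).sub ((cg 0 1).pow 2))
    ((((cg 0 0).mul (hu.pow 2)).add ((((cg 0 1).const_mul 2).mul hu).mul hv)).add
      ((cg 1 1).mul (hv.pow 2)))
    ((((hu.mul (cσ 0 0)).add (hv.mul (cσ 0 1))).mul (((cg 1 1).neg.mul hv).sub ((cg 0 1).mul hu))).add
      (((hu.mul (cσ 0 1)).add (hv.mul (cσ 1 1))).mul (((cg 0 1).mul hv).add ((cg 0 0).mul hu))))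
    rfl rfl rfl (by simpa [← hq] using hdq) (by simpa [← hq, ← hτ] using hTq.ne')
  have hD' := hD.deriv
  simp only [Pi.mul_apply, Pi.add_apply, Pi.sub_apply, Pi.neg_apply, Pi.pow_apply, ← hq, ← hτ] at hD'
  rw [hD']
  have hS := derS _ _ _ (k * (τ 0 ^ 2 + τ 1 ^ 2)) _ _ _ _ _ _
    (((linS (g q 0 0) (σ q 0 0)).mul (linS (g q 1 1) (σ q 1 1))).sub ((linS (g q 0 1) (σ q 0 1)).pow 2))
    ((((linS (g q 0 0) (σ q 0 0)).mul_const (τ 0 ^ 2)).add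
      ((((linS (g q 0 1) (σ q 0 1)).const_mul 2).mul_const (τ 0)).mul_const (τ 1))).add
      ((linS (g q 1 1) (σ q 1 1)).mul_const (τ 1 ^ 2)))
    (((((((linS (pd 0 (fun y => g y 0 0) q) (pd 0 (fun y => σ y 0 0) q)).div_const 2).const_mul (τ 0 ^ 2)).add
      (((linS (pd 1 (fun y => g y 0 0) q) (pd 1 (fun y => σ y 0 0) q)).div_const 2).const_mul (2 * τ 0 * τ 1))).add
      (((linS (pd 1 (fun y => g y 0 1) q) (pd 1 (fun y => σ y 0 1) q)).sub
        ((linS (pd 0 (fun y => g y 1 1) q) (pd 0 (fun y => σ y 1 1) q)).div_const 2)).const_mul (τ 1 ^ 2))).mul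
      (((linS (g q 1 1) (σ q 1 1)).neg.mul_const (τ 1)).sub ((linS (g q 0 1) (σ q 0 1)).mul_const (τ 0)))).add
     (((((((linS (pd 0 (fun y => g y 0 1) q) (pd 0 (fun y => σ y 0 1) q)).sub
        ((linS (pd 1 (fun y => g y 0 0) q) (pd 1 (fun y => σ y 0 0) q)).div_const 2)).const_mul (τ 0 ^ 2)).add
      (((linS (pd 0 (fun y => g y 1 1) q) (pd 0 (fun y => σ y 1 1) q)).div_const 2).const_mul (2 * τ 0 * τ 1))).add
      (((linS (pd 1 (fun y => g y 1 1) q) (pd 1 (fun y => σ y 1 1) q)).div_const 2).const_mul (τ 1 ^ 2)))).mul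
      (((linS (g q 0 1) (σ q 0 1)).mul_const (τ 1)).add ((linS (g q 0 0) (σ q 0 0)).mul_const (τ 0)))))
    rfl rfl rfl (by simpa using hdq) (by simpa using hTq.ne')
  refine hS.congr_deriv ?_
  simp only [Pi.mul_apply, Pi.add_apply, Pi.sub_apply, Pi.neg_apply, Pi.pow_apply, zero_mul, add_zero]
  clear hS hD hD' hFs hF hfun
  convert main using 1
  · congr 4 <;> ring
  · congr 2
    congr 1
    · congr 2; ring
    · congr 1
      congr 1
      · congr 1; ring
      · congr 1; ring
end
end

section
/- Let g be a symmetric positive definite real 2×2 matrix, σ a symmetric real 2×2 matrix, and τ₋, τ₊ ∈ ℝ² with det[τ₋ τ₊] > 0, where [τ₋ τ₊] is the matrix with columns τ₋ and τ₊. For a symmetric positive definite matrix ρ define the interior angle θ(ρ) = arccos( −(τ₋ᵀ ρ τ₊) / (√(τ₋ᵀ ρ τ₋) · √(τ₊ᵀ ρ τ₊)) ). Let τ̂₋, τ̂₊ be the g-unit tangents of τ₋, τ₊ and ν̂₋, ν̂₊ the g-unit normals of τ₋, τ₊. Then t ↦ θ(g + tσ) is differentiable at t = 0 with derivative ½ (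 τ̂₋ᵀ σ ν̂₋ − ν̂₊ᵀ σ τ̂₊ ). (First variation of the interior angle in the direction σ.) -/
noncomputable section

open Matrix BigOperators

theorem angle_aux (A B C A1 B1 C1 d s : ℝ) (hA : 0 < A) (hC : 0 < C) (hd : 0 < d) (hs : 0 < s)
    (h : A * C - B ^ 2 = (s * d) ^ 2) :
    HasDerivAt (fun t : ℝ => Real.arccos
      (-(B + t * B1) / (Real.sqrt (A + t * A1) * Real.sqrt (C + t * C1))))
      ((B1 - B * A1 / (2 * A) - B * C1 / (2 * C)) / (s * d)) 0 := by
  have lin : ∀ X Y : ℝ, HasDerivAt (fun t : ℝ => X + t * Y) Y 0 := by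
    intro X Y
    simpa using ((hasDerivAt_id (0 : ℝ)).mul_const Y).const_add X
  have hsA := (lin A A1).sqrt (by simpa using hA.ne')
  have hsC := (lin C C1).sqrt (by simpa using hC.ne')
  obtain ⟨p, hp, rfl⟩ : ∃ p : ℝ, 0 < p ∧ A = p ^ 2 :=
    ⟨Real.sqrt A, Real.sqrt_pos.2 hA, (Real.sq_sqrt hA.le).symm⟩
  obtain ⟨q, hq, rfl⟩ : ∃ q : ℝ, 0 < q ∧ C = q ^ 2 :=
    ⟨Real.sqrt C, Real.sqrt_pos.2 hC, (Real.sq_sqrt hC.le).symm⟩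
  have hp2 : Real.sqrt (p ^ 2) = p := Real.sqrt_sq hp.le
  have hq2 : Real.sqrt (q ^ 2) = q := Real.sqrt_sq hq.le
  have hsd : 0 < s * d := mul_pos hs hd
  have hq' : p * q ≠ 0 := (mul_pos hp hq).ne'
  have hf := (lin B B1).neg.fun_div (hsA.fun_mul hsC) (by simpa [hp2, hq2] using ⟨hp.ne', hq.ne'⟩)
  have hone : 1 - (-B / (p * q)) ^ 2 = (s * d / (p * q)) ^ 2 := by
    field_simp
    linarith
  have hpos : 0 < (s * d / (p * q)) ^ 2 := by positivity
  have hval : -(B + 0 * B1) / (Real.sqrt (p ^ 2 + 0 * A1) * Real.sqrt (q ^ 2 + 0 * C1))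
      = -B / (p * q) := by simp [hp2, hq2]
  have hac := (Real.hasDerivAt_arccos (x := -B / (p * q))
    (by intro h0; rw [h0] at hone; norm_num at hone; rw [← hone] at hpos; simp at hpos)
    (by intro h0; rw [h0] at hone; norm_num at hone; rw [← hone] at hpos; simp at hpos))
  rw [← hval] at hac
  have := hac.comp (0 : ℝ) hf
  refine this.congr_deriv ?_
  rw [hval, hone, Real.sqrt_sq (by positivity)]
  simp only [zero_mul, add_zero, hp2, hq2, Pi.neg_apply]
  field_simp
  ring

theorem unit_aux (g σ : Mat2) (hg : g 1 0 = g 0 1) (hσ : σ 1 0 = σ 0 1) (s : ℝ) (hs : 0 < s)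
    (hD : g 0 0 * g 1 1 - g 0 1 * g 0 1 = s ^ 2) (τ : Vec2) (hA : 0 < τ ⬝ᵥ g.mulVec τ) :
    gUnitTangent g τ ⬝ᵥ σ.mulVec (gUnitNormal g τ) =
      (τ ⬝ᵥ σ.mulVec ![-(g 1 1 * τ 1) - g 0 1 * τ 0, g 0 1 * τ 1 + g 0 0 * τ 0])
        / (s * (τ ⬝ᵥ g.mulVec τ)) ∧
    gUnitNormal g τ ⬝ᵥ σ.mulVec (gUnitTangent g τ) =
      gUnitTangent g τ ⬝ᵥ σ.mulVec (gUnitNormal g τ) := by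
  have hdet : g.det = s ^ 2 := by rw [Matrix.det_fin_two, hg, hD]
  have hN : gNormal g τ =
      (s ^ 2)⁻¹ • ![-(g 1 1 * τ 1) - g 0 1 * τ 0, g 0 1 * τ 1 + g 0 0 * τ 0] := by
    ext k
    fin_cases k <;>
      simp [gNormal, Matrix.inv_def, hdet, Matrix.adjugate_fin_two, eps2, Fin.sum_univ_two, hg] <;>
      ring
  have hNN : gNormal g τ ⬝ᵥ g.mulVec (gNormal g τ) = (τ ⬝ᵥ g.mulVec τ) / s ^ 2 := by
    have e : ![-(g 1 1 * τ 1) - g 0 1 * τ 0, g 0 1 * τ 1 + g 0 0 * τ 0] ⬝ᵥ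
        g.mulVec ![-(g 1 1 * τ 1) - g 0 1 * τ 0, g 0 1 * τ 1 + g 0 0 * τ 0] =
        s ^ 2 * (τ ⬝ᵥ g.mulVec τ) := by
      rw [← hD]
      simp [Matrix.mulVec, dotProduct, Fin.sum_univ_two, hg]
      ring
    rw [hN]
    simp only [Matrix.mulVec_smul, dotProduct_smul, smul_dotProduct, smul_eq_mul]
    rw [e]
    field_simp
  obtain ⟨p, hp, hpA⟩ : ∃ p : ℝ, 0 < p ∧ τ ⬝ᵥ g.mulVec τ = p ^ 2 :=
    ⟨_, Real.sqrt_pos.2 hA, (Real.sq_sqrt hA.le).symm⟩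
  constructor
  · rw [gUnitTangent, gUnitNormal, hNN, hN, hpA, ← div_pow, Real.sqrt_sq hp.le,
      Real.sqrt_sq (by positivity)]
    simp only [Matrix.mulVec_smul, dotProduct_smul, smul_dotProduct, smul_eq_mul]
    field_simp
  · simp [Matrix.mulVec, dotProduct, Fin.sum_univ_two, hσ]
    ring

/-- first variation of the interior angle in the direction `σ`. -/
theorem firstVariation_angle
    (g : Mat2) (hg_symm : g.IsSymm) (hg_pos : g.PosDef)
    (σ : Mat2) (hσ_symm : σ.IsSymm)
    (τm τp : Vec2) (hdet : 0 < Matrix.det !![τm 0, τp 0; τm 1, τp 1]) :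
    HasDerivAt
      (fun t : ℝ => Real.arccos
        (-(τm ⬝ᵥ (g + t • σ).mulVec τp) /
          (Real.sqrt (τm ⬝ᵥ (g + t • σ).mulVec τm) *
            Real.sqrt (τp ⬝ᵥ (g + t • σ).mulVec τp))))
      (1 / 2 * (gUnitTangent g τm ⬝ᵥ σ.mulVec (gUnitNormal g τm)
        - gUnitNormal g τp ⬝ᵥ σ.mulVec (gUnitTangent g τp))) 0 := by
  have hg := hg_symm.apply 0 1
  have hσ := hσ_symm.apply 0 1
  have hDpos := hg_pos.det_pos
  rw [Matrix.det_fin_two, hg] at hDpos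
  rw [Matrix.det_fin_two_of] at hdet
  have hm : τm ≠ 0 := by rintro rfl; simp at hdet
  have hp : τp ≠ 0 := by rintro rfl; simp at hdet
  have hA : 0 < τm ⬝ᵥ g.mulVec τm := by simpa using hg_pos.dotProduct_mulVec_pos hm
  have hC : 0 < τp ⬝ᵥ g.mulVec τp := by simpa using hg_pos.dotProduct_mulVec_pos hp
  obtain ⟨s, hs, hD⟩ : ∃ s : ℝ, 0 < s ∧ g 0 0 * g 1 1 - g 0 1 * g 0 1 = s ^ 2 :=
    ⟨_, Real.sqrt_pos.2 hDpos, (Real.sq_sqrt hDpos.le).symm⟩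
  have key := angle_aux (τm ⬝ᵥ g.mulVec τm) (τm ⬝ᵥ g.mulVec τp) (τp ⬝ᵥ g.mulVec τp)
    (τm ⬝ᵥ σ.mulVec τm) (τm ⬝ᵥ σ.mulVec τp) (τp ⬝ᵥ σ.mulVec τp) _ s hA hC hdet hs (by
      rw [mul_pow, ← hD]
      simp [Matrix.mulVec, dotProduct, Fin.sum_univ_two, hg]
      ring)
  obtain ⟨um, -⟩ := unit_aux g σ hg hσ s hs hD τm hA
  obtain ⟨up, up'⟩ := unit_aux g σ hg hσ s hs hD τp hC
  simp only [Matrix.add_mulVec, Matrix.smul_mulVec, dotProduct_add, dotProduct_smul, smul_eq_mul]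
  refine key.congr_deriv ?_
  rw [up', um, up]
  have e1 : (τm 0 * τp 1 - τp 0 * τm 1) *
      (τm ⬝ᵥ σ.mulVec ![-(g 1 1 * τm 1) - g 0 1 * τm 0, g 0 1 * τm 1 + g 0 0 * τm 0]) =
      (τm ⬝ᵥ g.mulVec τm) * (τm ⬝ᵥ σ.mulVec τp)
        - (τm ⬝ᵥ g.mulVec τp) * (τm ⬝ᵥ σ.mulVec τm) := by
    simp [Matrix.mulVec, dotProduct, Fin.sum_univ_two, hg, hσ]
    ring
  have e2 : (τm 0 * τp 1 - τp 0 * τm 1) *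
      (τp ⬝ᵥ σ.mulVec ![-(g 1 1 * τp 1) - g 0 1 * τp 0, g 0 1 * τp 1 + g 0 0 * τp 0]) =
      -((τp ⬝ᵥ g.mulVec τp) * (τm ⬝ᵥ σ.mulVec τp)
        - (τm ⬝ᵥ g.mulVec τp) * (τp ⬝ᵥ σ.mulVec τp)) := by
    simp [Matrix.mulVec, dotProduct, Fin.sum_univ_two, hg, hσ]
    ring
  generalize (τm ⬝ᵥ σ.mulVec ![-(g 1 1 * τm 1) - g 0 1 * τm 0,
    g 0 1 * τm 1 + g 0 0 * τm 0]) = X at *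
  generalize (τp ⬝ᵥ σ.mulVec ![-(g 1 1 * τp 1) - g 0 1 * τp 0,
    g 0 1 * τp 1 + g 0 0 * τp 0]) = Y at *
  generalize τm ⬝ᵥ g.mulVec τm = A at *
  generalize τp ⬝ᵥ g.mulVec τp = C at *
  generalize τm ⬝ᵥ g.mulVec τp = B at *
  generalize τm ⬝ᵥ σ.mulVec τm = A1 at *
  generalize τp ⬝ᵥ σ.mulVec τp = C1 at *
  generalize τm ⬝ᵥ σ.mulVec τp = B1 at *
  have hcomm : τm 0 * τp 1 - τp 0 * τm 1 ≠ 0 := hdet.ne'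
  generalize τm 0 * τp 1 - τp 0 * τm 1 = d at *
  have hX : X = (A * B1 - B * A1) / d := by field_simp; linarith
  have hY : Y = -(C * B1 - B * C1) / d := by field_simp; linarith
  rw [hX, hY]
  field_simp
  ring
end
end

section
/- Let g be a symmetric positive definite real 2×2 matrix, σ a symmetric real 2×2 matrix, and (τ, ν) a Euclidean orthonormal basis of ℝ². Then the function t ↦ (νᵀ(g+tσ)τ) / ( (τᵀ(g+tσ)τ) · √(det(g+tσ)) ) is differentiable at t = 0 with derivative (τᵀστ) · ( −(νᵀgτ)(2 det g + (τᵀgτ)(νᵀgν)) / (2 (τᵀgτ)² (det g)^{3/2}) ) + ( 2 (νᵀgν)(νᵀστ) − (νᵀgτ)(νᵀσν) ) / (2 (det g)^{3/2}). (First-order expansion of g_{ντ}/(g_{ττ}√(det g)): the derivative splits into a multiple of the tangential-tangential component σ_{ττ} and a term involving only σ_{ντ} and σ_{νν}.) -/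
noncomputable section

open Matrix BigOperators

/-- The determinant of a symmetric matrix in a Euclidean orthonormal basis. -/
theorem det_eq_of_orthonormal (M : Mat2) (hM : M.IsSymm) (τ ν : Vec2)
    (hτ : τ ⬝ᵥ τ = 1) (hν : ν ⬝ᵥ ν = 1) (hτν : τ ⬝ᵥ ν = 0) :
    M.det = (τ ⬝ᵥ M.mulVec τ) * (ν ⬝ᵥ M.mulVec ν) - (ν ⬝ᵥ M.mulVec τ) ^ 2 := by
  have h : M 1 0 = M 0 1 := hM.apply 0 1
  simp only [Matrix.det_fin_two, dotProduct, Matrix.mulVec, Fin.sum_univ_two, h] at *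
  have hd : (τ 0 * ν 1 - τ 1 * ν 0) ^ 2 = 1 := by
    linear_combination (ν 0 * ν 0 + ν 1 * ν 1) * hτ + hν - (τ 0 * ν 0 + τ 1 * ν 1) * hτν
  linear_combination -(M 0 0 * M 1 1 - M 0 1 * M 0 1) * hd

/-- first variation of `g_{ντ}/(g_{ττ} √(det g))`. -/
theorem firstVariation_beta2
    (g : Mat2) (hg_symm : g.IsSymm) (hg_pos : g.PosDef)
    (σ : Mat2) (hσ_symm : σ.IsSymm)
    (τ ν : Vec2) (hτ : τ ⬝ᵥ τ = 1) (hν : ν ⬝ᵥ ν = 1) (hτν : τ ⬝ᵥ ν = 0) :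
    HasDerivAt
      (fun t : ℝ => (ν ⬝ᵥ (g + t • σ).mulVec τ) /
        ((τ ⬝ᵥ (g + t • σ).mulVec τ) * Real.sqrt (g + t • σ).det))
      ((τ ⬝ᵥ σ.mulVec τ) *
          (-(ν ⬝ᵥ g.mulVec τ) * (2 * g.det + (τ ⬝ᵥ g.mulVec τ) * (ν ⬝ᵥ g.mulVec ν)) /
            (2 * (τ ⬝ᵥ g.mulVec τ) ^ 2 * Real.sqrt g.det ^ 3)) +
        (2 * (ν ⬝ᵥ g.mulVec ν) * (ν ⬝ᵥ σ.mulVec τ)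
          - (ν ⬝ᵥ g.mulVec τ) * (ν ⬝ᵥ σ.mulVec ν)) / (2 * Real.sqrt g.det ^ 3)) 0 := by
  have hb : 0 < τ ⬝ᵥ g.mulVec τ := by
    have h0 : τ ≠ 0 := by
      rintro rfl
      simp at hτ
    simpa using hg_pos.dotProduct_mulVec_pos h0
  have hD : 0 < g.det := hg_pos.det_pos
  have hlin : ∀ (x y : Vec2) (t : ℝ),
      x ⬝ᵥ (g + t • σ).mulVec y = x ⬝ᵥ g.mulVec y + t * (x ⬝ᵥ σ.mulVec y) := by
    intro x y t
    rw [Matrix.add_mulVec, Matrix.smul_mulVec, dotProduct_add, dotProduct_smul, smul_eq_mul]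
  have hdet : ∀ t : ℝ, (g + t • σ).det =
      (τ ⬝ᵥ g.mulVec τ + t * (τ ⬝ᵥ σ.mulVec τ)) * (ν ⬝ᵥ g.mulVec ν + t * (ν ⬝ᵥ σ.mulVec ν))
        - (ν ⬝ᵥ g.mulVec τ + t * (ν ⬝ᵥ σ.mulVec τ)) ^ 2 := by
    intro t
    rw [det_eq_of_orthonormal _ (hg_symm.add (hσ_symm.smul t)) τ ν hτ hν hτν]
    simp only [hlin]
  have hdg := det_eq_of_orthonormal g hg_symm τ ν hτ hν hτν
  simp only [hlin, hdet]
  generalize τ ⬝ᵥ g.mulVec τ = b at *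
  generalize ν ⬝ᵥ g.mulVec τ = a at *
  generalize ν ⬝ᵥ g.mulVec ν = c at *
  generalize τ ⬝ᵥ σ.mulVec τ = B at *
  generalize ν ⬝ᵥ σ.mulVec τ = A at *
  generalize ν ⬝ᵥ σ.mulVec ν = C at *
  generalize g.det = D at *
  have haff : ∀ p q : ℝ, HasDerivAt (fun t : ℝ => p + t * q) q 0 := by
    intro p q
    simpa using ((hasDerivAt_id (0 : ℝ)).mul_const q).const_add p
  have hdD : HasDerivAt (fun t : ℝ => (b + t * B) * (c + t * C) - (a + t * A) ^ 2)
      (B * c + b * C - 2 * a * A) 0 := by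
    refine (((haff b B).fun_mul (haff c C)).fun_sub ((haff a A).fun_pow 2)).congr_deriv ?_
    simp
  have hs : 0 < Real.sqrt D := Real.sqrt_pos.mpr hD
  have hs2 : Real.sqrt D ^ 2 = D := Real.sq_sqrt hD.le
  have h0 : (b + 0 * B) * (c + 0 * C) - (a + 0 * A) ^ 2 = D := by rw [hdg]; ring
  have hsq := hdD.sqrt (by rw [h0]; exact hD.ne')
  have hmain := (haff a A).fun_div ((haff b B).fun_mul hsq)
    (by rw [h0]; simpa using ⟨hb.ne', hs.ne'⟩)
  refine hmain.congr_deriv ?_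
  rw [h0]
  generalize Real.sqrt D = s at *
  subst hs2
  have hb' := hb.ne'
  have hs' := hs.ne'
  simp only [zero_mul, add_zero]
  field_simp
  linear_combination (2 * A * b) * hdg
end
end
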